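/- Let B be a barrier. The lexicographic order on B (comparing two sets via their increasing enumerations, by the values at the first position where they differ) is a well-order of order type at most the ordinal ω^ω if and only if B is ω-bounded, i.e., there exists a function h : ℕ → ℕ such that every s ∈ B satisfies |s| ≤ h(min s). -/

import Mathlib

/-! If `B` is `ω`-bounded, the sets `s ∈ B` with `min s = n` have at most `H n` elements, where `H`
may be taken strictly increasing. Sending `s = {n < a₁ < ⋯}` to
`ω ^ H n + ω ^ (H n - 1) * n + ω ^ (H n - 2) * a₁ + ⋯` is strictly monotone for the
lexicographic order, because no member of `B` is an initial segment of another
(`lexRank_strictMono`). All values lie below `ω ^ ω`, so the order is a well-order of type at most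
`ω ^ ω`.

Conversely, suppose that the members with minimum `n` have unbounded cardinality. The key point is
`IsBarrier.exists_card_le`: if `s ∈ B` and `F ⊆ s`, then for every infinite `Y` above `s` the
member of `B` that begins `F ∪ Y` has at least `s.card` elements. It is proved by removing the
elements of `s` one at a time: if deleting `x` from `F ∪ {x}` did not force the member to use more
of `Y`, the member beginning `F ∪ Y` would be a proper subset of the one beginning `F ∪ {x} ∪ Y`.
With `F = {n}`, this shows that for every `K` all members `{n} ∪ t` with `t` far enough out have
more than `K` elements. Such a tree, in which every node branches over all large elements of the
base and every branch has length at least `K`, has lexicographic type at least `ω ^ K`, by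
induction on `K` (`IsBarrier.omega0_pow_le`). Hence the members with minimum `n` have type at least
`ω ^ ω`, and since there is a member above all of them, the type of `B` exceeds `ω ^ ω`. -/

/-- The base of a family of finite sets: the union of its members. -/
def BarrierBase (B : Set (Finset ℕ)) : Set ℕ :=
  ⋃ s ∈ B, (↑s : Set ℕ)

/-- `s` is an initial segment of `X` under the increasing enumeration. -/
def IsInitSeg (s : Finset ℕ) (X : Set ℕ) : Prop :=
  ↑s ⊆ X ∧ ∀ x ∈ X, x ∉ s → ∀ y ∈ s, y < x

/-- `B` is a barrier: its base is infinite, every infinite subset of the base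
has a member of `B` as an initial segment, and no member of `B` is a proper
subset of another. -/
def IsBarrier (B : Set (Finset ℕ)) : Prop :=
  (BarrierBase B).Infinite ∧
  (∀ X : Set ℕ, X ⊆ BarrierBase B → X.Infinite → ∃ s ∈ B, IsInitSeg s X) ∧
  (∀ s ∈ B, ∀ t ∈ B, ¬ s ⊂ t)

/-- Lexicographic comparison of finite sets of naturals via their increasing
enumerations: `s <lex t` iff the least element on which they disagree belongs
to `s`. -/
def LexLt (s t : Finset ℕ) : Prop :=
  ∃ m : ℕ, m ∈ s ∧ m ∉ t ∧ ∀ x : ℕ, x < m → (x ∈ s ↔ x ∈ t)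

/-- `B` is ω-bounded: `|s| ≤ h (min s)` for all `s ∈ B`, for some `h`. -/
def OmegaBounded (B : Set (Finset ℕ)) : Prop :=
  ∃ h : ℕ → ℕ, ∀ s ∈ B, s.card ≤ h (sInf (↑s : Set ℕ))

/-! ### Bounded members: an ordinal rank below `ω ^ ω` -/

/-- For `s = {a₀ < a₁ < ⋯}`, the ordinal `ω ^ (K - 1) * a₀ + ω ^ (K - 2) * a₁ + ⋯`, with `K`
terms; missing elements count as `0`. -/
noncomputable def lexRank : ℕ → Finset ℕ → Ordinal.{0}
  | 0, _ => 0
  | K + 1, s => Ordinal.omega0 ^ K * ((sInf (s : Set ℕ) : ℕ) : Ordinal) +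
      lexRank K (s.erase (sInf (s : Set ℕ)))

theorem omega0_pow_pos (K : ℕ) : (0 : Ordinal.{0}) < Ordinal.omega0 ^ K :=
  pow_pos Ordinal.omega0_pos K

theorem omega0_pow_mul_succ_le (K a b : ℕ) (h : a < b) :
    (Ordinal.omega0 ^ K * (a : Ordinal.{0}) + Ordinal.omega0 ^ K : Ordinal.{0}) ≤
      Ordinal.omega0 ^ K * (b : Ordinal.{0}) := by
  have : (Ordinal.omega0 ^ K * (a : Ordinal.{0}) + Ordinal.omega0 ^ K : Ordinal.{0}) =
      Ordinal.omega0 ^ K * ((a + 1 : ℕ) : Ordinal.{0}) := by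
    rw [Nat.cast_succ, mul_add, mul_one]
  rw [this]
  gcongr
  exact h

theorem lexRank_lt (K : ℕ) (s : Finset ℕ) : lexRank K s < Ordinal.omega0 ^ K := by
  induction K generalizing s with
  | zero => simp [lexRank]
  | succ K ih =>
    rw [lexRank]
    calc _ < Ordinal.omega0 ^ K * ((sInf (s : Set ℕ) : ℕ) : Ordinal) + Ordinal.omega0 ^ K := by
          gcongr
          exact ih _
      _ ≤ Ordinal.omega0 ^ K * ((sInf (s : Set ℕ) + 1 : ℕ) : Ordinal) :=
          omega0_pow_mul_succ_le _ _ _ (Nat.lt_succ_self _)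
      _ ≤ Ordinal.omega0 ^ K * Ordinal.omega0 := by
          gcongr
          exact (Ordinal.natCast_lt_omega0 _).le
      _ = _ := (pow_succ _ _).symm

theorem omega0_pow_add_lexRank_lt (K : ℕ) (s : Finset ℕ) :
    Ordinal.omega0 ^ K + lexRank K s < Ordinal.omega0 ^ (K + 1) :=
  calc _ < Ordinal.omega0 ^ K * ((1 : ℕ) : Ordinal) + Ordinal.omega0 ^ K := by
        rw [Nat.cast_one, mul_one]
        gcongr
        exact lexRank_lt _ _
    _ ≤ Ordinal.omega0 ^ K * ((2 : ℕ) : Ordinal) := omega0_pow_mul_succ_le _ _ _ one_lt_two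
    _ ≤ Ordinal.omega0 ^ K * Ordinal.omega0 := by
        gcongr
        exact (Ordinal.natCast_lt_omega0 _).le
    _ = _ := (pow_succ _ _).symm

/-- `lexRank K` is strictly monotone on sets with at most `K` elements. The element `b` says that
`t` is not an initial segment of `s`. -/
theorem lexRank_strictMono (K : ℕ) (s t : Finset ℕ) (hs : s.card ≤ K) {m b : ℕ}
    (hms : m ∈ s) (hmt : m ∉ t) (hbt : b ∈ t) (hmb : m < b)
    (hx : ∀ x < m, (x ∈ s ↔ x ∈ t)) : lexRank K s < lexRank K t := by
  induction K generalizing s t with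
  | zero =>
    have : s = ∅ := by simpa using hs
    simp [this] at hms
  | succ K ih =>
    have hS : sInf (s : Set ℕ) ∈ s := by exact_mod_cast Nat.sInf_mem (s := (s : Set ℕ)) ⟨m, hms⟩
    have hT : sInf (t : Set ℕ) ∈ t := by exact_mod_cast Nat.sInf_mem (s := (t : Set ℕ)) ⟨b, hbt⟩
    have hSle : ∀ x ∈ s, sInf (s : Set ℕ) ≤ x := fun x hx => Nat.sInf_le (by exact_mod_cast hx)
    have hTle : ∀ x ∈ t, sInf (t : Set ℕ) ≤ x := fun x hx => Nat.sInf_le (by exact_mod_cast hx)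
    rw [lexRank, lexRank]
    generalize sInf (s : Set ℕ) = a at *
    generalize sInf (t : Set ℕ) = c at *
    rcases lt_trichotomy a c with h | h | h
    · calc _ < Ordinal.omega0 ^ K * (a : Ordinal) + Ordinal.omega0 ^ K := by
            gcongr
            exact lexRank_lt _ _
        _ ≤ Ordinal.omega0 ^ K * (c : Ordinal) := omega0_pow_mul_succ_le _ _ _ h
        _ ≤ _ := le_self_add
    · subst h
      gcongr
      have hma : m ≠ a := fun h => hmt (h ▸ hT)
      have hba : b ≠ a := by
        have := hSle m hms
        omega
      refine ih _ _ ?_ (Finset.mem_erase.2 ⟨hma, hms⟩) (fun h => hmt (Finset.mem_of_mem_erase h))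
        (Finset.mem_erase.2 ⟨hba, hbt⟩) ?_
      · rw [Finset.card_erase_of_mem hS]
        omega
      · intro x hxm
        simp only [Finset.mem_erase, hx x hxm]
    · have h1 := hSle m hms
      have h2 := hSle c ((hx c (by omega)).2 hT)
      omega

theorem IsBarrier.exists_gt_mem {B : Set (Finset ℕ)} (hB : IsBarrier B) {s t : Finset ℕ}
    (hs : s ∈ B) (ht : t ∈ B) {m : ℕ} (hms : m ∈ s) (hmt : m ∉ t)
    (hx : ∀ x < m, (x ∈ s ↔ x ∈ t)) : ∃ b ∈ t, m < b := by
  have h : ¬ t ⊆ s := fun h => hB.2.2 t ht s hs ⟨h, fun h' => hmt (h' hms)⟩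
  obtain ⟨b, hb, hbs⟩ := Finset.not_subset.1 h
  refine ⟨b, hb, ?_⟩
  rcases lt_trichotomy m b with h | h | h
  · exact h
  · exact absurd (h ▸ hms) hbs
  · exact absurd ((hx b h).2 hb) hbs

theorem lexLt_trichotomy (s t : Finset ℕ) : LexLt s t ∨ s = t ∨ LexLt t s := by
  by_cases h : s = t
  · exact Or.inr (Or.inl h)
  have hex : ∃ m, ¬ (m ∈ s ↔ m ∈ t) := by
    by_contra hc
    push Not at hc
    exact h (Finset.ext hc)
  classical
  have h1 := Nat.find_spec hex
  have h2 : ∀ x < Nat.find hex, (x ∈ s ↔ x ∈ t) := fun x hx => not_not.1 (Nat.find_min hex hx)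
  by_cases hm : Nat.find hex ∈ s
  · exact Or.inl ⟨_, hm, fun h => h1 ⟨fun _ => h, fun _ => hm⟩, h2⟩
  · refine Or.inr (Or.inr ⟨_, ?_, hm, fun x hx => (h2 x hx).symm⟩)
    by_contra h
    exact h1 ⟨fun hs => absurd hs hm, fun ht => absurd ht h⟩

/-- A strictly monotone map into the ordinals below `o` witnesses a well-order of type at most
`o`. -/
theorem exists_type_le_of_rank {B : Set (Finset ℕ)} {o : Ordinal.{0}} (ρ : B → Ordinal.{0})
    (hρ : ∀ s t : B, LexLt s.1 t.1 → ρ s < ρ t) (ho : ∀ s, ρ s < o) :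
    ∃ hwo : IsWellOrder B (fun s t => LexLt s.1 t.1),
      @Ordinal.type B (fun s t => LexLt s.1 t.1) hwo ≤ o := by
  have hwf : WellFounded (fun s t : B => LexLt s.1 t.1) :=
    Subrelation.wf (fun {a b} h => hρ a b h) (InvImage.wf ρ Ordinal.lt_wf)
  have hwo : IsWellOrder B (fun s t => LexLt s.1 t.1) :=
    { wf := hwf
      trichotomous := fun a b h1 h2 => by
        rcases lexLt_trichotomy a.1 b.1 with h | h | h
        · exact absurd h h1
        · exact Subtype.ext h
        · exact absurd h h2 }
  refine ⟨hwo, ?_⟩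
  have key : ∀ s : B, Ordinal.typein (fun s t : B => LexLt s.1 t.1) s ≤ ρ s := by
    intro s
    induction s using hwf.induction with
    | _ s ih =>
      refine le_of_forall_lt fun γ hγ => ?_
      obtain ⟨t, rfl⟩ := Ordinal.typein_surj (fun s t : B => LexLt s.1 t.1)
        (hγ.trans (Ordinal.typein_lt_type _ s))
      have hts := (Ordinal.typein_lt_typein _).1 hγ
      exact (ih t hts).trans_lt (hρ _ _ hts)
  refine le_of_forall_lt fun γ hγ => ?_
  obtain ⟨t, rfl⟩ := Ordinal.typein_surj (fun s t : B => LexLt s.1 t.1) hγ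
  exact (key t).trans_lt (ho t)

theorem exists_type_le_of_omegaBounded {B : Set (Finset ℕ)} (hB : IsBarrier B)
    (hb : OmegaBounded B) :
    ∃ hwo : IsWellOrder B (fun s t => LexLt s.1 t.1),
      @Ordinal.type B (fun s t => LexLt s.1 t.1) hwo ≤ Ordinal.omega0 ^ Ordinal.omega0 := by
  obtain ⟨h, hh⟩ := hb
  -- a strictly increasing bound `H`, so that the leading exponents separate different minima
  set H : ℕ → ℕ := fun n => ∑ i ∈ Finset.range (n + 1), (h i + 1) with hH
  have hstep : ∀ n, H (n + 1) = H n + (h (n + 1) + 1) := fun n => Finset.sum_range_succ _ _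
  have hmono : StrictMono H := strictMono_nat_of_lt_succ fun n => by
    rw [hstep]
    omega
  have hle : ∀ n, h n ≤ H n := by
    intro n
    rcases n with _ | n
    · simp [hH]
    · rw [hstep]
      omega
  refine exists_type_le_of_rank (fun s => Ordinal.omega0 ^ H (sInf (s.1 : Set ℕ)) +
    lexRank (H (sInf (s.1 : Set ℕ))) s.1) ?_ ?_
  · rintro ⟨s, hs⟩ ⟨t, ht⟩ ⟨m, hms, hmt, hx⟩
    dsimp only at *
    obtain ⟨b, hbt, hmb⟩ := hB.exists_gt_mem hs ht hms hmt hx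
    have hT : sInf (t : Set ℕ) ∈ t := by exact_mod_cast Nat.sInf_mem (s := (t : Set ℕ)) ⟨b, hbt⟩
    have hSle : ∀ x ∈ s, sInf (s : Set ℕ) ≤ x := fun x hx => Nat.sInf_le (by exact_mod_cast hx)
    have hst : sInf (s : Set ℕ) ≤ sInf (t : Set ℕ) := by
      by_contra hc
      have h1 := hSle m hms
      have h2 := hSle _ ((hx (sInf (t : Set ℕ)) (by omega)).2 hT)
      omega
    have hcard := (hh s hs).trans (hle _)
    rcases hst.lt_or_eq with hlt | heq
    · have hH' := hmono hlt
      generalize H (sInf (s : Set ℕ)) = p at *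
      generalize H (sInf (t : Set ℕ)) = q at *
      calc _ < Ordinal.omega0 ^ (p + 1) := omega0_pow_add_lexRank_lt _ _
        _ ≤ Ordinal.omega0 ^ q := pow_le_pow_right₀ Ordinal.one_lt_omega0.le hH'
        _ ≤ _ := le_self_add
    · rw [← heq]
      gcongr
      exact lexRank_strictMono _ _ _ hcard hms hmt hbt hmb hx
  · rintro ⟨s, hs⟩
    dsimp only
    generalize H (sInf (s : Set ℕ)) = p
    calc _ < Ordinal.omega0 ^ (p + 1) := omega0_pow_add_lexRank_lt _ _
      _ = Ordinal.omega0 ^ ((p + 1 : ℕ) : Ordinal) := (Ordinal.opow_natCast _ _).symm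
      _ ≤ _ := Ordinal.opow_le_opow_right Ordinal.omega0_pos (Ordinal.natCast_lt_omega0 _).le

/-! ### Unbounded members: long lexicographic intervals -/

theorem isInitSeg_comparable {s t : Finset ℕ} {X : Set ℕ} (hs : IsInitSeg s X)
    (ht : IsInitSeg t X) : s ⊆ t ∨ t ⊂ s := by
  by_cases h : s ⊆ t
  · exact Or.inl h
  · obtain ⟨x, hxs, hxt⟩ := Finset.not_subset.1 h
    refine Or.inr ⟨fun y hy => ?_, h⟩
    by_contra hys
    have h1 := hs.2 y (ht.1 hy) hys x hxs
    have h2 := ht.2 x (hs.1 hxs) hxt y hy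
    omega

/-- Cardinalities of members do not decrease along the base: if `s ∈ B`, `F ⊆ s` and `Y` lies
above `s`, then the member of `B` that begins `F ∪ Y` contains `F` and has at least `s.card`
elements. -/
theorem IsBarrier.exists_card_le {B : Set (Finset ℕ)} (hB : IsBarrier B) {s : Finset ℕ}
    (hs : s ∈ B) {Y : Set ℕ} (hY : Y ⊆ BarrierBase B) (hYinf : Y.Infinite)
    (hsY : ∀ a ∈ s, ∀ y ∈ Y, a < y) (k : ℕ) (F : Finset ℕ) (hF : F ⊆ s)
    (hk : (s \ F).card = k) :
    ∃ t ∈ B, IsInitSeg t (↑F ∪ Y) ∧ F ⊆ t ∧ s.card ≤ t.card := by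
  induction k generalizing F with
  | zero =>
    have hsF : s ⊆ F := by simpa using hk
    obtain rfl := hF.antisymm hsF
    refine ⟨F, hs, ⟨Set.subset_union_left, ?_⟩, subset_rfl, le_rfl⟩
    rintro x (hx | hx) hxF y hy
    · exact absurd hx hxF
    · exact hsY y hy x hx
  | succ k ih =>
    obtain ⟨x, hx⟩ : (s \ F).Nonempty := Finset.card_pos.1 (by omega)
    obtain ⟨hxs, hxF⟩ := Finset.mem_sdiff.1 hx
    obtain ⟨t', ht'B, ht', hFt', hcard⟩ := ih (insert x F) (Finset.insert_subset hxs hF) (by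
      rw [Finset.sdiff_insert, Finset.card_erase_of_mem hx, hk]; rfl)
    obtain ⟨t, htB, ht⟩ := hB.2.1 (↑F ∪ Y) (by
      rintro y (hy | hy)
      · exact Set.mem_biUnion hs (hF hy)
      · exact hY hy) (hYinf.mono Set.subset_union_right)
    have hFt : F ⊆ t := by
      by_contra hc
      obtain ⟨a, haF, hat⟩ := Finset.not_subset.1 hc
      have htF : t ⊆ F := by
        intro y hy
        rcases ht.1 hy with h | h
        · exact h
        · have h1 := ht.2 a (Or.inl haF) hat y hy
          have h2 := hsY a (hF haF) y h
          omega
      exact hB.2.2 t htB s hs ⟨htF.trans hF, fun h => hat (h (hF haF))⟩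
    have hxY : x ∉ Y := fun h => lt_irrefl _ (hsY x hxs x h)
    have hxt : x ∉ t := by
      intro h
      rcases ht.1 h with h | h
      · exact hxF h
      · exact hxY h
    -- the parts of `t` and `t'` beyond `s` are both initial segments of `Y`
    have hA : IsInitSeg (t \ F) Y := by
      constructor
      · intro y hy
        have hy' := Finset.mem_sdiff.1 (Finset.mem_coe.1 hy)
        exact (ht.1 hy'.1).resolve_left hy'.2
      · intro z hz hzn y hy
        refine ht.2 z (Or.inr hz) (fun h => hzn (Finset.mem_sdiff.2 ⟨h, fun hzF => ?_⟩)) y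
          (Finset.mem_sdiff.1 hy).1
        exact lt_irrefl _ (hsY z (hF hzF) z hz)
    have hA' : IsInitSeg (t' \ insert x F) Y := by
      constructor
      · intro y hy
        have hy' := Finset.mem_sdiff.1 (Finset.mem_coe.1 hy)
        exact (ht'.1 hy'.1).resolve_left hy'.2
      · intro z hz hzn y hy
        refine ht'.2 z (Or.inr hz) (fun h => hzn (Finset.mem_sdiff.2 ⟨h, fun hzF => ?_⟩)) y
          (Finset.mem_sdiff.1 hy).1
        exact lt_irrefl _ (hsY z (Finset.insert_subset hxs hF hzF) z hz)
    have hxt' : x ∈ t' := hFt' (Finset.mem_insert_self x F)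
    refine ⟨t, htB, ht, hFt, hcard.trans ?_⟩
    rcases isInitSeg_comparable hA hA' with h | h
    · refine absurd ⟨fun y hy => ?_, fun h => hxt (h hxt')⟩ (hB.2.2 t htB t' ht'B)
      by_cases hyF : y ∈ F
      · exact hFt' (Finset.mem_insert_of_mem hyF)
      · exact (Finset.mem_sdiff.1 (h (Finset.mem_sdiff.2 ⟨hy, hyF⟩))).1
    · have h1 := Finset.card_lt_card h
      rw [Finset.card_sdiff_of_subset hFt, Finset.card_sdiff_of_subset hFt',
        Finset.card_insert_of_notMem hxF] at h1
      have h2 := Finset.card_le_card hFt'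
      rw [Finset.card_insert_of_notMem hxF] at h2
      omega

/-- Every member of `B` beginning `F ∪ Y`, with `Y` beyond `N`, contains `F` and has at least `K`
further elements. -/
def DeepAbove (B : Set (Finset ℕ)) (F : Finset ℕ) (N K : ℕ) : Prop :=
  ∀ Y : Set ℕ, Y ⊆ BarrierBase B → Y.Infinite → (∀ y ∈ Y, N ≤ y) →
    ∃ t ∈ B, IsInitSeg t (↑F ∪ Y) ∧ F ⊆ t ∧ F.card + K ≤ t.card

/-- `s` is `F` together with elements that are all at least `N`. -/
def Extends (F : Finset ℕ) (N : ℕ) (s : Finset ℕ) : Prop :=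
  F ⊆ s ∧ ∀ y ∈ s, y ∉ F → N ≤ y

theorem Extends.of_insert {F s : Finset ℕ} {N x : ℕ} (hx : N ≤ x)
    (h : Extends (insert x F) (x + 1) s) : Extends F N s := by
  refine ⟨(Finset.subset_insert _ _).trans h.1, fun y hy hyF => ?_⟩
  by_cases hyx : y = x
  · omega
  · have := h.2 y hy (by simp [hyx, hyF])
    omega

theorem Extends.lexLt {F s t : Finset ℕ} {N x y : ℕ} (hF : ∀ a ∈ F, a < N) (hx : N ≤ x)
    (hxy : x < y) (hs : Extends (insert x F) (x + 1) s) (ht : Extends (insert y F) (y + 1) t) :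
    LexLt s t := by
  have hmem : ∀ z ∈ t, z < y → z ∈ F := by
    intro z hz hzy
    by_contra hzF
    have := ht.2 z hz (by simp [hzF, hzy.ne])
    omega
  refine ⟨x, hs.1 (Finset.mem_insert_self _ _), fun h => ?_, fun z hz => ⟨fun h => ?_, fun h => ?_⟩⟩
  · have := hF x (hmem x h hxy)
    omega
  · by_contra hzt
    have := hs.2 z h (by
      rw [Finset.mem_insert]
      rintro (h | h)
      · omega
      · exact hzt (ht.1 (Finset.mem_insert_of_mem h)))
    omega
  · exact hs.1 (Finset.mem_insert_of_mem (hmem z h (by omega)))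

theorem exists_mem_ge {X : Set ℕ} (hX : X.Infinite) (N : ℕ) : ∃ x ∈ X, N ≤ x := by
  obtain ⟨x, hx, h⟩ := hX.exists_gt N
  exact ⟨x, hx, h.le⟩

theorem infinite_inter_Ici {X : Set ℕ} (hX : X.Infinite) (N : ℕ) : (X ∩ Set.Ici N).Infinite := by
  refine fun hfin => hX ((hfin.union (Set.finite_Iio N)).subset fun x hx => ?_)
  rcases lt_or_ge x N with h | h
  · exact Or.inr h
  · exact Or.inl ⟨hx, h⟩

theorem IsBarrier.exists_extends {B : Set (Finset ℕ)} (hB : IsBarrier B) {F : Finset ℕ} {N K : ℕ}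
    (h : DeepAbove B F N K) : ∃ t ∈ B, Extends F N t := by
  obtain ⟨t, ht, hi, hF, -⟩ := h (BarrierBase B ∩ Set.Ici N) Set.inter_subset_left
    (infinite_inter_Ici hB.1 N) (fun y hy => hy.2)
  exact ⟨t, ht, hF, fun y hy hyF => ((hi.1 hy).resolve_left hyF).2⟩

theorem DeepAbove.insert {B : Set (Finset ℕ)} {F : Finset ℕ} {N K x : ℕ}
    (h : DeepAbove B F N (K + 1)) (hxB : x ∈ BarrierBase B) (hx : N ≤ x) (hxF : x ∉ F) :
    DeepAbove B (insert x F) (x + 1) K := by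
  intro Y hY hYinf hYx
  obtain ⟨t, ht, hi, hF, hc⟩ := h (Insert.insert x Y) (Set.insert_subset hxB hY)
    (hYinf.mono (Set.subset_insert _ _)) (by
      rintro y (rfl | hy)
      · exact hx
      · have := hYx y hy
        omega)
  have heq : ((Insert.insert x F : Finset ℕ) : Set ℕ) ∪ Y = ↑F ∪ Insert.insert x Y := by
    ext z
    simp only [Finset.coe_insert, Set.mem_union, Set.mem_insert_iff]
    tauto
  have hxt : x ∈ t := by
    -- `t` has an element outside `F`, and `x` is the least available one
    have : ¬ t ⊆ F := fun h => by
      have := Finset.card_le_card h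
      omega
    obtain ⟨z, hzt, hzF⟩ := Finset.not_subset.1 this
    by_contra hxt
    have h1 := hi.2 x (Or.inr (Set.mem_insert _ _)) hxt z hzt
    rcases (hi.1 hzt).resolve_left hzF with rfl | h2
    · omega
    · have := hYx z h2
      omega
  refine ⟨t, ht, heq ▸ hi, Finset.insert_subset hxt hF, ?_⟩
  rw [Finset.card_insert_of_notMem hxF]
  omega

/-- If the members of `B` extending `F` beyond `N` all have at least `K` elements outside `F`, and
a strictly monotone rank is at least `β` on them, then it is at least `β + ω ^ K` on every `u`
lying above all of them. -/
theorem IsBarrier.omega0_pow_le {B : Set (Finset ℕ)} (hB : IsBarrier B) (ρ : B → Ordinal.{0})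
    (hρ : ∀ s t : B, LexLt s.1 t.1 → ρ s < ρ t) (K : ℕ) (F : Finset ℕ) (N : ℕ)
    (hF : ∀ a ∈ F, a < N) (hd : DeepAbove B F N K) (β : Ordinal.{0})
    (hβ : ∀ t : B, Extends F N t.1 → β ≤ ρ t) (u : B)
    (hu : ∀ t : B, Extends F N t.1 → LexLt t.1 u.1) : β + Ordinal.omega0 ^ K ≤ ρ u := by
  induction K generalizing F N β u with
  | zero =>
    obtain ⟨t, htB, ht⟩ := hB.exists_extends hd
    have h1 := hβ ⟨t, htB⟩ ht
    have h2 := hρ ⟨t, htB⟩ u (hu ⟨t, htB⟩ ht)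
    rw [pow_zero]
    exact Order.add_one_le_of_lt (h1.trans_lt h2)
  | succ K ih =>
    have hnF : ∀ x, N ≤ x → x ∉ F := fun x hx hxF => by
      have := hF x hxF
      omega
    -- each of the cones over `F ∪ {x}`, for successive `x`, contributes a summand `ω ^ K`
    have key : ∀ m : ℕ, ∃ x ∈ BarrierBase B, N ≤ x ∧ ∀ t : B,
        Extends (insert x F) (x + 1) t.1 → β + Ordinal.omega0 ^ K * (m : Ordinal) ≤ ρ t := by
      intro m
      induction m with
      | zero =>
        obtain ⟨x, hxB, hx⟩ := exists_mem_ge hB.1 N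
        refine ⟨x, hxB, hx, fun t ht => ?_⟩
        simpa using hβ t (ht.of_insert hx)
      | succ m ihm =>
        obtain ⟨x, hxB, hx, hxt⟩ := ihm
        obtain ⟨y, hyB, hy⟩ := exists_mem_ge hB.1 (x + 1)
        refine ⟨y, hyB, by omega, fun t ht => ?_⟩
        rw [Nat.cast_succ, mul_add, mul_one, ← add_assoc]
        refine ih (insert x F) (x + 1) ?_ (hd.insert hxB hx (hnF x hx)) _ hxt t
          (fun s hs => hs.lexLt hF hx hy ht)
        intro a ha
        rcases Finset.mem_insert.1 ha with rfl | ha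
        · omega
        · have := hF a ha
          omega
    rw [pow_succ, Ordinal.add_le_iff_of_isSuccLimit]
    · intro d hd'
      obtain ⟨c, hc, hdc⟩ := (Ordinal.lt_mul_iff_of_isSuccLimit Ordinal.isSuccLimit_omega0).1 hd'
      obtain ⟨m, rfl⟩ := Ordinal.lt_omega0.1 hc
      obtain ⟨x, hxB, hx, hxt⟩ := key m
      obtain ⟨t, htB, ht⟩ := hB.exists_extends (hd.insert hxB hx (hnF x hx))
      calc β + d ≤ β + Ordinal.omega0 ^ K * (m : Ordinal) := by gcongr
        _ ≤ ρ ⟨t, htB⟩ := hxt _ ht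
        _ ≤ ρ u := (hρ _ _ (hu _ (ht.of_insert hx))).le
    · exact Ordinal.isSuccLimit_mul_right (omega0_pow_pos K) Ordinal.isSuccLimit_omega0

theorem omegaBounded_of_type_le {B : Set (Finset ℕ)} (hB : IsBarrier B)
    (hwo : IsWellOrder B (fun s t => LexLt s.1 t.1))
    (hle : @Ordinal.type B (fun s t => LexLt s.1 t.1) hwo ≤ Ordinal.omega0 ^ Ordinal.omega0) :
    OmegaBounded B := by
  suffices h : ∀ n, ∃ k, ∀ s ∈ B, sInf (s : Set ℕ) = n → s.card ≤ k by
    choose h hh using h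
    exact ⟨h, fun s hs => hh _ s hs rfl⟩
  intro n
  by_contra hc
  push Not at hc
  -- a member `u` whose minimum exceeds `n`: it lies above all members with minimum `n`
  obtain ⟨u, huB, hui⟩ := hB.2.1 (BarrierBase B ∩ Set.Ici (n + 1)) Set.inter_subset_left
    (infinite_inter_Ici hB.1 (n + 1))
  have hun : ∀ y ∈ u, n < y := fun y hy => (hui.1 hy).2
  have hwit : ∀ K : ℕ, Ordinal.omega0 ^ K ≤
      Ordinal.typein (fun s t : B => LexLt s.1 t.1) ⟨u, huB⟩ := by
    intro K
    obtain ⟨s, hsB, hsn, hsK⟩ := hc (K + 1)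
    have hs0 : s.Nonempty := Finset.card_pos.1 (by omega)
    have hns : n ∈ s := by
      rw [← hsn]
      exact_mod_cast Nat.sInf_mem (s := (s : Set ℕ)) hs0
    have hb : ∀ a ∈ s, a < s.sup id + 1 := fun a ha => Nat.lt_succ_of_le (Finset.le_sup (f := id) ha)
    have hnN := hb n hns
    have := hB.omega0_pow_le (fun s => Ordinal.typein (fun s t : B => LexLt s.1 t.1) s)
      (fun s t h => (Ordinal.typein_lt_typein _).2 h) K {n} (s.sup id + 1)
      (by simpa using hnN) ?_ 0 (fun _ _ => zero_le) ⟨u, huB⟩ ?_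
    · simpa using this
    · intro Y hY hYinf hYN
      obtain ⟨t, ht, h1, h2, h3⟩ := hB.exists_card_le hsB hY hYinf
        (fun a ha y hy => (hb a ha).trans_le (hYN y hy)) _ {n} (by simpa using hns) rfl
      exact ⟨t, ht, h1, h2, by simp; omega⟩
    · intro t ht
      refine ⟨n, ht.1 (by simp), fun h => lt_irrefl _ (hun n h), fun x hx => ⟨fun h => ?_, fun h => ?_⟩⟩
      · have := ht.2 x h (by simp; omega)
        omega
      · have := hun x h
        omega
  have hlt := Ordinal.typein_lt_type (fun s t : B => LexLt s.1 t.1) ⟨u, huB⟩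
  refine absurd (hlt.trans_le hle) (not_lt.2 ?_)
  rw [Ordinal.opow_le_of_isSuccLimit Ordinal.omega0_ne_zero Ordinal.isSuccLimit_omega0]
  intro b hb
  obtain ⟨K, rfl⟩ := Ordinal.lt_omega0.1 hb
  rw [Ordinal.opow_natCast]
  exact hwit K

/-- for a barrier `B`, the lexicographic order on `B` is a
well-order of order type at most `ω ^ ω` iff `B` is ω-bounded. -/
theorem stmt14 (B : Set (Finset ℕ)) (hB : IsBarrier B) :
    (∃ hwo : IsWellOrder B (fun s t => LexLt s.1 t.1),
        @Ordinal.type B (fun s t => LexLt s.1 t.1) hwo ≤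
          Ordinal.omega0 ^ Ordinal.omega0) ↔
      OmegaBounded B := by
  exact ⟨fun ⟨hwo, hle⟩ => omegaBounded_of_type_le hB hwo hle, exists_type_le_of_omegaBounded hB⟩
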